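/- Let t_n denote the cardinality of NC(T_n). For every n ≥ 2, t_n = 2·t_{n−1} + 2^{n−2}. -/

import Mathlib

open Finset

/-- A finpartition of a finite set of points in the plane is *noncrossing* if the
convex hulls (over `ℝ`) of its blocks are pairwise disjoint. -/
def IsNoncrossing {P : Finset ℂ} (π : Finpartition P) : Prop :=
  (π.parts : Set (Finset ℂ)).Pairwise fun B₁ B₂ =>
    Disjoint (convexHull ℝ (B₁ : Set ℂ)) (convexHull ℝ (B₂ : Set ℂ))

/-- The poset `NC(P)` of noncrossing partitions of `P`, ordered by refinement:
`π ≤ μ` iff every block of `μ` is a union of blocks of `π`. -/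
abbrev NC (P : Finset ℂ) : Type := {π : Finpartition P // IsNoncrossing π}

/-- The blocks of a noncrossing partition. -/
def NC.parts {P : Finset ℂ} (π : NC P) : Finset (Finset ℂ) := π.1.parts

/-- Two points lie in a common block of a noncrossing partition. -/
def NC.SameBlock {P : Finset ℂ} (π : NC P) (a b : ℂ) : Prop :=
  ∃ B ∈ π.parts, a ∈ B ∧ b ∈ B

/-- The configuration `T_n = {1, …, n} ∪ {i} ⊆ ℂ`: the points `x_k = k` for
`1 ≤ k ≤ n` together with `y = i`. -/
noncomputable def Tconfig (n : ℕ) : Finset ℂ :=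
  ((Finset.Icc 1 n).image fun k : ℕ => (k : ℂ)) ∪ {Complex.I}

/-!
The convex hull of a block contains every point between two of its points, so a noncrossing
partition cuts `x_1, …, x_n` into intervals, determined by the set `C` of the indices
`k < n` after which a cut is made. Conversely `y`, which lies off the line, may stay alone or join
any one of the `#C + 1` intervals without creating a crossing. Hence `t_n = ∑ (#C + 2)` over all
`C ⊆ {1, …, n - 1}`, and splitting this sum according to whether `n - 1 ∈ C` gives the recursion.
-/

section Counting

variable {a b : ℕ}

theorem count_eq_count_iff {p : ℕ → Prop} [DecidablePred p] {k l : ℕ} (hkl : k ≤ l) :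
    Nat.count p k = Nat.count p l ↔ ∀ j ∈ Ico k l, ¬ p j := by
  constructor
  · intro h j hj hpj
    obtain ⟨hkj, hjl⟩ := mem_Ico.1 hj
    exact h.not_lt ((Nat.count_monotone p hkj).trans_lt (Nat.count_strict_mono hpj hjl))
  · intro h
    refine (Nat.count_monotone p hkl).antisymm (not_lt.1 fun hlt => ?_)
    obtain ⟨j, hj, hpj⟩ := Nat.exists_of_count_lt_count hlt
    exact h j (mem_Ico.2 hj) hpj

theorem image_count_mem_Icc {C : Finset ℕ} (hab : a ≤ b) (hC : C ⊆ Ico a b) :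
    (Icc a b).image (Nat.count (· ∈ C)) = range (#C + 1) := by
  have hfin : (Set.ofPred (· ∈ C)).Finite := C.finite_toSet
  have hcard : #hfin.toFinset = #C := congrArg card (by ext; simp)
  ext v
  simp only [mem_image, mem_range, Nat.lt_succ_iff]
  constructor
  · rintro ⟨k, -, rfl⟩
    exact hcard ▸ Nat.count_le_card hfin k
  · intro hv
    rcases hv.lt_or_eq with hv | rfl
    · have hmem : Nat.nth (· ∈ C) v ∈ C := Nat.nth_mem_of_lt_card hfin (hcard ▸ hv)
      exact ⟨Nat.nth (· ∈ C) v, Ico_subset_Icc_self (hC hmem),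
        Nat.count_nth_of_lt_card_finite hfin (hcard ▸ hv)⟩
    · refine ⟨b, right_mem_Icc.2 hab, ?_⟩
      rw [Nat.count_eq_card_filter_range]
      congr 1
      ext k
      simpa using fun hk => (mem_Ico.1 (hC hk)).2

/-- The places in `[a, b)` where a sequence changes its value. They cut `[a, b]` into the maximal
intervals on which the sequence is constant. -/
def cutSet {β : Type*} [DecidableEq β] (f : ℕ → β) (a b : ℕ) : Finset ℕ :=
  {k ∈ Ico a b | f k ≠ f (k + 1)}

theorem cutSet_subset {β : Type*} [DecidableEq β] (f : ℕ → β) : cutSet f a b ⊆ Ico a b :=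
  filter_subset _ _

theorem count_cutSet_eq_iff {β : Type*} [DecidableEq β] {f : ℕ → β}
    (hf : ∀ p, (Set.Icc a b ∩ f ⁻¹' {p}).OrdConnected) {k l : ℕ} (hk : k ∈ Icc a b)
    (hl : l ∈ Icc a b) :
    Nat.count (· ∈ cutSet f a b) k = Nat.count (· ∈ cutSet f a b) l ↔ f k = f l := by
  wlog hkl : k ≤ l generalizing k l
  · rw [eq_comm, this hl hk (le_of_not_ge hkl), eq_comm]
  have hno_cut : (∀ j ∈ Ico k l, j ∉ cutSet f a b) ↔ ∀ j ∈ Ico k l, f j = f (j + 1) := by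
    refine forall₂_congr fun j hj => ?_
    have hj' : j ∈ Ico a b := Ico_subset_Ico (mem_Icc.1 hk).1 (mem_Icc.1 hl).2 hj
    simp [cutSet, mem_Ico.1 hj']
  rw [count_eq_count_iff hkl, hno_cut]
  constructor
  · intro h
    have hconst : ∀ j, k ≤ j → j ≤ l → f k = f j := by
      intro j hkj
      induction j, hkj using Nat.le_induction with
      | base => exact fun _ => rfl
      | succ j hkj ih =>
        exact fun hjl => (ih (Nat.le_of_succ_le hjl)).trans (h j (mem_Ico.2 ⟨hkj, hjl⟩))
    exact hconst l hkl le_rfl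
  · intro h j hj
    have hconst : ∀ i ∈ Set.Icc k l, f i = f k := fun i hi =>
      ((hf (f k)).out ⟨mem_Icc.1 hk, rfl⟩ ⟨mem_Icc.1 hl, h.symm⟩ hi).2
    obtain ⟨hkj, hjl⟩ := mem_Ico.1 hj
    rw [hconst j ⟨hkj, hjl.le⟩, hconst (j + 1) ⟨by omega, hjl⟩]

theorem sum_powerset_insert_card_add {α : Type*} [DecidableEq α] {s : Finset α} {x : α}
    (hx : x ∉ s) (c : ℕ) :
    ∑ C ∈ (insert x s).powerset, (#C + c) = 2 * ∑ C ∈ s.powerset, (#C + c) + 2 ^ #s := by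
  have hinsert : ∀ C ∈ s.powerset, #(insert x C) + c = #C + c + 1 := fun C hC => by
    rw [card_insert_of_notMem fun h => hx (mem_powerset.1 hC h), Nat.add_right_comm]
  rw [sum_powerset_insert hx, sum_congr rfl hinsert, sum_add_distrib (g := fun _ => 1), sum_const,
    card_powerset, smul_eq_mul, mul_one, two_mul, add_assoc]

end Counting

section KerPartition

variable {α ι : Type*} [DecidableEq α] [DecidableEq ι] {P : Finset α}

/-- The partition of `P` in which two points share a block if and only if `f` gives them the same
label. -/
def kerPartition (P : Finset α) (f : α → ι) : Finpartition P :=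
  haveI : DecidableRel (Setoid.ker f).r := fun x y => decEq (f x) (f y)
  Finpartition.ofSetSetoid (Setoid.ker f) P

theorem mem_part_kerPartition {f : α → ι} {x y : α} :
    y ∈ (kerPartition P f).part x ↔ x ∈ P ∧ y ∈ P ∧ f x = f y :=
  Finpartition.mem_part_ofSetSetoid_iff_rel P

theorem part_kerPartition_eq_iff {f : α → ι} {x y : α} (hx : x ∈ P) (hy : y ∈ P) :
    (kerPartition P f).part x = (kerPartition P f).part y ↔ f x = f y := by
  rw [← Finpartition.mem_part_iff_part_eq_part _ hx hy, mem_part_kerPartition]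
  simp [hx, hy, eq_comm]

theorem parts_eq_image_part (π : Finpartition P) : π.parts = P.image π.part := by
  ext B
  rw [mem_image]
  exact ⟨fun hB => π.part_surjOn hB, fun ⟨_, hx, hB⟩ => hB ▸ π.part_mem.2 hx⟩

theorem eq_kerPartition_iff {π : Finpartition P} {f : α → ι} :
    π = kerPartition P f ↔ ∀ x ∈ P, ∀ y ∈ P, (π.part x = π.part y ↔ f x = f y) := by
  refine ⟨fun h x hx y hy => h ▸ part_kerPartition_eq_iff hx hy, fun h => Finpartition.ext ?_⟩
  rw [parts_eq_image_part, parts_eq_image_part]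
  refine image_congr fun x hx => ?_
  ext y
  rw [mem_part_kerPartition]
  constructor
  · intro hy
    have hyP := π.part_subset x hy
    exact ⟨hx, hyP, (h x hx y hyP).1 ((π.mem_part_iff_part_eq_part hyP hx).1 hy).symm⟩
  · rintro ⟨-, hyP, hxy⟩
    exact (π.mem_part_iff_part_eq_part hyP hx).2 ((h x hx y hyP).2 hxy).symm

end KerPartition

section Noncrossing

variable {P : Finset ℂ}

theorem isNoncrossing_kerPartition {ι : Type*} [DecidableEq ι] {K : Set ℂ} {f : ℂ → ι}
    (hP : (P : Set ℂ) ⊆ K) (hf : ∀ p, Convex ℝ (K ∩ f ⁻¹' {p})) :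
    IsNoncrossing (kerPartition P f) := by
  intro B₁ h₁ B₂ h₂ hne
  obtain ⟨x, hx, rfl⟩ := (kerPartition P f).part_surjOn h₁
  obtain ⟨y, hy, rfl⟩ := (kerPartition P f).part_surjOn h₂
  have hull_subset (z : ℂ) :
      convexHull ℝ ((kerPartition P f).part z : Set ℂ) ⊆ K ∩ f ⁻¹' {f z} := by
    refine convexHull_min (fun w hw => ?_) (hf _)
    obtain ⟨-, hwP, hzw⟩ := mem_part_kerPartition.1 (mem_coe.1 hw)
    exact ⟨hP hwP, hzw.symm⟩
  refine Disjoint.mono (hull_subset x) (hull_subset y) (Set.disjoint_left.2 ?_)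
  rintro w ⟨-, hwx⟩ ⟨-, hwy⟩
  exact hne ((part_kerPartition_eq_iff hx hy).2 (hwx.symm.trans hwy))

theorem IsNoncrossing.part_eq_of_mem_segment {π : Finpartition P} (hπ : IsNoncrossing π)
    {x y z : ℂ} (hx : x ∈ P) (hy : y ∈ P) (hz : z ∈ P) (hxz : π.part x = π.part z)
    (hyseg : y ∈ segment ℝ x z) : π.part y = π.part x := by
  by_contra hne
  have hy_hull : y ∈ convexHull ℝ (π.part x : Set ℂ) :=
    segment_subset_convexHull (mem_coe.2 (π.mem_part hx))
      (mem_coe.2 (hxz ▸ π.mem_part hz)) hyseg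
  exact Set.disjoint_left.1 (hπ (π.part_mem.2 hy) (π.part_mem.2 hx) hne)
    (subset_convexHull ℝ _ (mem_coe.2 (π.mem_part hy))) hy_hull

theorem ofReal_mem_segment {r s t : ℝ} (hrs : r ≤ s) (hst : s ≤ t) :
    (s : ℂ) ∈ segment ℝ (r : ℂ) (t : ℂ) := by
  have himage := image_segment ℝ Complex.ofRealCLM.toLinearMap.toAffineMap r t
  rw [segment_eq_Icc (hrs.trans hst)] at himage
  exact himage.subset (Set.mem_image_of_mem _ ⟨hrs, hst⟩)

theorem IsNoncrossing.ordConnected_part_natCast {π : Finpartition P} (hπ : IsNoncrossing π)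
    {a b : ℕ} (hP : ∀ k ∈ Set.Icc a b, (k : ℂ) ∈ P) (B : Finset ℂ) :
    (Set.Icc a b ∩ (fun k : ℕ => π.part (k : ℂ)) ⁻¹' {B}).OrdConnected := by
  refine ⟨?_⟩
  rintro k ⟨hk, hkB⟩ l ⟨hl, hlB⟩ j ⟨hkj, hjl⟩
  have hj : j ∈ Set.Icc a b := ⟨hk.1.trans hkj, hjl.trans hl.2⟩
  have hseg : (j : ℂ) ∈ segment ℝ (k : ℂ) (l : ℂ) := by
    exact_mod_cast ofReal_mem_segment (Nat.cast_le.2 hkj) (Nat.cast_le.2 hjl)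
  exact ⟨hj, (hπ.part_eq_of_mem_segment (hP k hk) (hP j hj) (hP l hl) (hkB.trans hlB.symm)
    hseg).trans hkB⟩

end Noncrossing

section HalfPlaneLabel

variable {ι : Type*}

/-- The labelling of the plane that labels real points by `g` and all other points by `v`. On the
closed upper half-plane and for monotone `g`, its fibres are disjoint convex sets, which separate
the blocks of a partition. -/
noncomputable def halfPlaneLabel (g : ℝ → ι) (v : ι) (z : ℂ) : ι :=
  if z.im = 0 then g z.re else v

theorem halfPlaneLabel_of_im_eq_zero {g : ℝ → ι} {v : ι} {z : ℂ} (hz : z.im = 0) :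
    halfPlaneLabel g v z = g z.re :=
  if_pos hz

theorem halfPlaneLabel_of_im_ne_zero {g : ℝ → ι} {v : ι} {z : ℂ} (hz : z.im ≠ 0) :
    halfPlaneLabel g v z = v :=
  if_neg hz

/-- A convex combination of points of the closed upper half-plane is real only if all of them are,
so the open half-plane may be added to one fibre without affecting the others. -/
theorem convex_fiber_halfPlaneLabel [PartialOrder ι] {g : ℝ → ι} (hg : Monotone g) (v p : ι) :
    Convex ℝ ({z : ℂ | 0 ≤ z.im} ∩ halfPlaneLabel g v ⁻¹' {p}) := by
  have hline : Convex ℝ (g ⁻¹' {p}) := (Set.ordConnected_singleton.preimage_mono hg).convex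
  rw [convex_iff_forall_pos]
  rintro z ⟨hz : 0 ≤ z.im, hzp : halfPlaneLabel g v z = p⟩
    w ⟨hw : 0 ≤ w.im, hwp : halfPlaneLabel g v w = p⟩ a b ha hb hab
  have him : (a • z + b • w).im = a * z.im + b * w.im := by simp
  have hre : (a • z + b • w).re = a * z.re + b * w.re := by simp
  have hreal : (a • z + b • w).im = 0 ↔ z.im = 0 ∧ w.im = 0 := by
    rw [him, add_eq_zero_iff_of_nonneg (by positivity) (by positivity)]
    simp [ha.ne', hb.ne']
  refine ⟨(by positivity : 0 ≤ a * z.im + b * w.im).trans_eq him.symm, ?_⟩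
  rw [Set.mem_preimage, Set.mem_singleton_iff]
  by_cases hzw : z.im = 0 ∧ w.im = 0
  · rw [halfPlaneLabel_of_im_eq_zero hzw.1] at hzp
    rw [halfPlaneLabel_of_im_eq_zero hzw.2] at hwp
    rw [halfPlaneLabel_of_im_eq_zero (hreal.2 hzw), hre]
    exact hline hzp hwp ha.le hb.le hab
  · rw [halfPlaneLabel_of_im_ne_zero (hreal.not.2 hzw)]
    rcases not_and_or.1 hzw with hz0 | hw0
    · rwa [halfPlaneLabel_of_im_ne_zero hz0] at hzp
    · rwa [halfPlaneLabel_of_im_ne_zero hw0] at hwp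

end HalfPlaneLabel

section Tconfig

variable {n : ℕ} {C D : Finset ℕ} {v w : ℕ}

theorem forall_mem_Tconfig {p : ℂ → Prop} :
    (∀ z ∈ Tconfig n, p z) ↔ (∀ k ∈ Icc 1 n, p (k : ℂ)) ∧ p Complex.I := by
  simp only [Tconfig, forall_mem_union, forall_mem_image, mem_singleton, forall_eq]

theorem natCast_mem_Tconfig {k : ℕ} (hk : k ∈ Icc 1 n) : (k : ℂ) ∈ Tconfig n :=
  (forall_mem_Tconfig.1 fun _ h => h).1 k hk

theorem I_mem_Tconfig : Complex.I ∈ Tconfig n :=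
  (forall_mem_Tconfig.1 fun _ h => h).2

/-- The label of `x_k` is the number of cuts before it, and `v` is the label of `y`. Rounding up
extends the count from `ℕ` to a monotone function on the real line. -/
noncomputable def cutLabel (C : Finset ℕ) (v : ℕ) : ℂ → ℕ :=
  halfPlaneLabel (fun x : ℝ => Nat.count (· ∈ C) ⌈x⌉₊) v

theorem cutLabel_natCast (k : ℕ) : cutLabel C v (k : ℂ) = Nat.count (· ∈ C) k := by
  simp [cutLabel, halfPlaneLabel]

theorem cutLabel_I : cutLabel C v Complex.I = v := by
  simp [cutLabel, halfPlaneLabel]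

/-- The partition of `T_n` that cuts `x_1, …, x_n` after each `x_k` with `k ∈ C` and adds `y` to
the `v`-th of the resulting intervals, counted from `0`. For `v > #C`, the point `y` is alone. -/
noncomputable def cutPartition (n : ℕ) (C : Finset ℕ) (v : ℕ) : Finpartition (Tconfig n) :=
  kerPartition (Tconfig n) (cutLabel C v)

theorem isNoncrossing_cutPartition : IsNoncrossing (cutPartition n C v) := by
  have hsubset : (Tconfig n : Set ℂ) ⊆ {z : ℂ | 0 ≤ z.im} :=
    forall_mem_Tconfig.2 ⟨fun k _ => by simp, by simp⟩
  exact isNoncrossing_kerPartition hsubset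
    (convex_fiber_halfPlaneLabel ((Nat.count_monotone _).comp Nat.ceil_mono) v)

theorem eq_cutPartition_iff {π : Finpartition (Tconfig n)} :
    π = cutPartition n C v ↔
      (∀ k ∈ Icc 1 n, ∀ l ∈ Icc 1 n,
        (π.part (k : ℂ) = π.part (l : ℂ) ↔ Nat.count (· ∈ C) k = Nat.count (· ∈ C) l)) ∧
      ∀ k ∈ Icc 1 n, (π.part (k : ℂ) = π.part Complex.I ↔ Nat.count (· ∈ C) k = v) := by
  simp only [cutPartition, eq_kerPartition_iff, forall_mem_Tconfig, cutLabel_natCast, cutLabel_I]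
  constructor
  · rintro ⟨h, -⟩
    exact ⟨fun k hk => (h k hk).1, fun k hk => (h k hk).2⟩
  · rintro ⟨hline, hI⟩
    refine ⟨fun k hk => ⟨hline k hk, hI k hk⟩, fun k hk => ?_, by simp⟩
    rw [eq_comm, hI k hk, eq_comm]

theorem cutPartition_injective (hn : 1 ≤ n) (hC : C ⊆ Ico 1 n) (hD : D ⊆ Ico 1 n)
    (hv : v < #C + 2) (hw : w < #D + 2) (h : cutPartition n C v = cutPartition n D w) :
    C = D ∧ v = w := by
  obtain ⟨hlineC, hIC⟩ := eq_cutPartition_iff.1 (rfl : cutPartition n C v = _)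
  obtain ⟨hlineD, hID⟩ := eq_cutPartition_iff.1 h
  have hcut : ∀ k ∈ Ico 1 n, (k ∈ C ↔ k ∈ D) := fun k hk => by
    have hk' : k ∈ Icc 1 n := Ico_subset_Icc_self hk
    have hk1 : k + 1 ∈ Icc 1 n := by simp only [mem_Ico, mem_Icc] at *; omega
    have := (hlineC _ hk1 k hk').symm.trans (hlineD _ hk1 k hk')
    rwa [Nat.count_succ_eq_count_iff, Nat.count_succ_eq_count_iff, not_iff_not] at this
  obtain rfl : C = D := by
    ext k
    exact ⟨fun hk => (hcut k (hC hk)).1 hk, fun hk => (hcut k (hD hk)).2 hk⟩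
  refine ⟨rfl, ?_⟩
  have hattained : ∀ u < #C + 1, (u = v ↔ u = w) := by
    intro u hu
    rw [← mem_range, ← image_count_mem_Icc hn hC, mem_image] at hu
    obtain ⟨k, hk, rfl⟩ := hu
    exact (hIC k hk).symm.trans (hID k hk)
  have := hattained v
  have := hattained w
  omega

theorem IsNoncrossing.exists_eq_cutPartition (hn : 1 ≤ n) {π : Finpartition (Tconfig n)}
    (hπ : IsNoncrossing π) : ∃ C ⊆ Ico 1 n, ∃ v < #C + 2, π = cutPartition n C v := by
  let f (k : ℕ) : Finset ℂ := π.part (k : ℂ)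
  let C := cutSet f 1 n
  have hCsub : C ⊆ Ico 1 n := cutSet_subset f
  have hline : ∀ k ∈ Icc 1 n, ∀ l ∈ Icc 1 n,
      (f k = f l ↔ Nat.count (· ∈ C) k = Nat.count (· ∈ C) l) := fun k hk l hl =>
    (count_cutSet_eq_iff (hπ.ordConnected_part_natCast fun j hj =>
      natCast_mem_Tconfig (mem_Icc.2 hj)) hk hl).symm
  have hbound : ∀ k ∈ Icc 1 n, Nat.count (· ∈ C) k < #C + 1 := fun k hk =>
    mem_range.1 (image_count_mem_Icc hn hCsub ▸ mem_image_of_mem _ hk)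
  by_cases hI : ∃ k ∈ Icc 1 n, f k = π.part Complex.I
  · obtain ⟨k, hk, hkI⟩ := hI
    refine ⟨C, hCsub, Nat.count (· ∈ C) k, (hbound k hk).trans (Nat.lt_succ_self _),
      eq_cutPartition_iff.2 ⟨hline, fun l hl => ?_⟩⟩
    rw [← hkI]
    exact hline l hl k hk
  · refine ⟨C, hCsub, #C + 1, Nat.lt_succ_self _, eq_cutPartition_iff.2 ⟨hline, fun l hl => ?_⟩⟩
    exact iff_of_false (fun h => hI ⟨l, hl, h⟩) (hbound l hl).ne

theorem card_NC_Tconfig (hn : 1 ≤ n) :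
    Nat.card (NC (Tconfig n)) = ∑ C ∈ (Ico 1 n).powerset, (#C + 2) := by
  let toNC (x : Σ C : (Ico 1 n).powerset, Fin (#C.1 + 2)) : NC (Tconfig n) :=
    ⟨cutPartition n x.1 x.2, isNoncrossing_cutPartition⟩
  have hbij : toNC.Bijective := by
    constructor
    · rintro ⟨⟨C, hC⟩, v⟩ ⟨⟨D, hD⟩, w⟩ h
      obtain ⟨rfl, hvw⟩ := cutPartition_injective hn (mem_powerset.1 hC) (mem_powerset.1 hD)
        v.2 w.2 (congrArg Subtype.val h)
      rw [Fin.ext hvw]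
    · rintro ⟨π, hπ⟩
      obtain ⟨C, hC, v, hv, hπC⟩ := hπ.exists_eq_cutPartition hn
      exact ⟨⟨⟨C, mem_powerset.2 hC⟩, ⟨v, hv⟩⟩, Subtype.ext hπC.symm⟩
  rw [← Nat.card_eq_of_bijective toNC hbij, Nat.card_eq_fintype_card, Fintype.card_sigma]
  simp only [Fintype.card_fin]
  exact sum_coe_sort (Ico 1 n).powerset fun C => #C + 2

end Tconfig

/-- For `n ≥ 2`, `t_n = 2 t_{n-1} + 2 ^ (n - 2)` where `t_n = |NC(T_n)|`. -/
theorem nc_T_card_recursion (n : ℕ) (hn : 2 ≤ n) :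
    Nat.card (NC (Tconfig n)) = 2 * Nat.card (NC (Tconfig (n - 1))) + 2 ^ (n - 2) := by
  rw [card_NC_Tconfig (by omega), card_NC_Tconfig (by omega), ← insert_Ico_sub_one_right_eq_Ico hn,
    sum_powerset_insert_card_add (by simp), Nat.card_Ico, Nat.sub_sub]
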